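/- Let E be the Euclidean space ℝⁿ, let F, G : E → ℝ be convex functions, let S ⊆ E be a set, and let h₀ ∈ S with F(h₀) ≥ 0 and G(h₀) > 0. Set μ = F(h₀)/G(h₀). Suppose s ∈ E is a subgradient of G at h₀, and suppose h' ∈ S minimises the function Φ(h) = F(h) − μ·⟨h − h₀, s⟩ + ‖h − h₀‖² over S. If moreover G(h') > 0, then F(h')/G(h') + ‖h' − h₀‖²/G(h') ≤ F(h₀)/G(h₀). (Sufficient decrease property of the generalised inverse power method, Lemma 1 of the paper.) -/

import Mathlib

open scoped RealInnerProductSpace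

/-! Comparing the values of `Φ` at `h'` and at `h₀` gives
`F h' + ‖h' - h₀‖ ^ 2 ≤ μ * (G h₀ + ⟪s, h' - h₀⟫)`, because `F h₀ = μ * G h₀`. As `μ ≥ 0`, the
subgradient inequality bounds the right-hand side by `μ * G h'`; it remains to divide by `G h'`. -/

/-- Here `l` plays the role of the linear increment of `G` from `h₀` to `h'`, and `d` that of the
proximal term. -/
theorem add_le_mul_of_sub_mul_add_le {R : Type*} [Ring R] [PartialOrder R] [IsOrderedRing R]
    {f f₀ g g₀ l d μ : R} (hμ : 0 ≤ μ) (hf₀ : f₀ ≤ μ * g₀) (hg : g₀ + l ≤ g)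
    (hf : f - μ * l + d ≤ f₀) : f + d ≤ μ * g :=
  calc
    f + d = (f - μ * l + d) + μ * l := by abel
    _ ≤ μ * g₀ + μ * l := by gcongr; exact hf.trans hf₀
    _ = μ * (g₀ + l) := (mul_add μ g₀ l).symm
    _ ≤ μ * g := mul_le_mul_of_nonneg_left hg hμ

theorem sufficient_decrease_general {E : Type*} [SeminormedAddCommGroup E] [InnerProductSpace ℝ E]
    {F G : E → ℝ} {S : Set E} {h₀ : E} (hh₀ : h₀ ∈ S) (hF₀ : 0 ≤ F h₀) (hG₀ : 0 < G h₀)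
    {μ : ℝ} (hμ : μ = F h₀ / G h₀)
    {s : E} (hs : ∀ h, G h ≥ G h₀ + ⟪s, h - h₀⟫)
    {h' : E} (hmin : ∀ h ∈ S,
      F h' - μ * ⟪h' - h₀, s⟫ + ‖h' - h₀‖ ^ 2 ≤
        F h - μ * ⟪h - h₀, s⟫ + ‖h - h₀‖ ^ 2)
    (hG' : 0 < G h') :
    F h' / G h' + ‖h' - h₀‖ ^ 2 / G h' ≤ F h₀ / G h₀ := by
  have hμ_nonneg : 0 ≤ μ := hμ ▸ div_nonneg hF₀ hG₀.le
  have hF₀_eq : F h₀ = μ * G h₀ := ((eq_div_iff hG₀.ne').1 hμ).symm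
  have descent : F h' - μ * ⟪s, h' - h₀⟫ + ‖h' - h₀‖ ^ 2 ≤ F h₀ := by
    simpa [real_inner_comm] using hmin h₀ hh₀
  have add_sq_le_mul : F h' + ‖h' - h₀‖ ^ 2 ≤ μ * G h' :=
    add_le_mul_of_sub_mul_add_le hμ_nonneg hF₀_eq.le (hs h') descent
  rwa [← add_div, ← hμ, div_le_iff₀ hG']

/-- Sufficient decrease property of the generalised inverse power method
(Lemma 1 of the paper). -/
theorem sufficient_decrease
    {n : ℕ}
    (F G : EuclideanSpace ℝ (Fin n) → ℝ)
    (hF : ConvexOn ℝ Set.univ F) (hG : ConvexOn ℝ Set.univ G)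
    (S : Set (EuclideanSpace ℝ (Fin n))) (h₀ : EuclideanSpace ℝ (Fin n)) (hh₀ : h₀ ∈ S)
    (hF₀ : 0 ≤ F h₀) (hG₀ : 0 < G h₀)
    (μ : ℝ) (hμ : μ = F h₀ / G h₀)
    (s : EuclideanSpace ℝ (Fin n)) (hs : ∀ h, G h ≥ G h₀ + ⟪s, h - h₀⟫)
    (h' : EuclideanSpace ℝ (Fin n)) (hh' : h' ∈ S)
    (hmin : ∀ h ∈ S,
      F h' - μ * ⟪h' - h₀, s⟫ + ‖h' - h₀‖ ^ 2 ≤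
        F h - μ * ⟪h - h₀, s⟫ + ‖h - h₀‖ ^ 2)
    (hG' : 0 < G h') :
    F h' / G h' + ‖h' - h₀‖ ^ 2 / G h' ≤ F h₀ / G h₀ :=
  sufficient_decrease_general hh₀ hF₀ hG₀ hμ hs hmin hG'
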